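/- arXiv:1003.5068 — 4 statements merged into one kernel-verified Lean document; each statement's English description precedes it below -/
import Mathlib

section
/- Foster drift condition establishing Theorem 1 (optimality of flow-aware CSMA): if the vector of traffic intensities ρ = (λ_1σ_1, …, λ_Kσ_K) lies in the interior of the capacity region, then there exist δ > 0 and a finite set A ⊆ ℕ^K such that for every state x ∈ ℕ^K with x ∉ A, the drift satisfies ΔF(x) ≤ −δ. -/
open scoped BigOperators

namespace FlowCSMA

/-- A set of links is a feasible schedule if its links are pairwise non-conflicting. -/
def Feasible {K : ℕ} (conflict : Fin K → Fin K → Prop) (S : Finset (Fin K)) : Prop :=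
  ∀ k ∈ S, ∀ l ∈ S, k ≠ l → ¬ conflict k l

/-- Weight of schedule `i` in state `x`:  `w_i(x) = ∏_{k ∈ S_i} α_k x_k`
(equal to 1 for the empty schedule). -/
noncomputable def schedWeight {K N : ℕ} (Sched : Fin N → Finset (Fin K)) (α : Fin K → ℝ)
    (x : Fin K → ℕ) (i : Fin N) : ℝ :=
  ∏ k ∈ Sched i, α k * (x k : ℝ)

/-- Selection probability of schedule `i` in state `x`. -/
noncomputable def schedProb {K N : ℕ} (Sched : Fin N → Finset (Fin K)) (α : Fin K → ℝ)
    (x : Fin K → ℕ) (i : Fin N) : ℝ :=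
  schedWeight Sched α x i / ∑ j, schedWeight Sched α x j

/-- Throughput of link `k` in state `x`: `φ_k(x) = φ̂_k ∑_{i : k ∈ S_i} p_i(x)`. -/
noncomputable def throughput {K N : ℕ} (Sched : Fin N → Finset (Fin K)) (α φhat : Fin K → ℝ)
    (x : Fin K → ℕ) (k : Fin K) : ℝ :=
  φhat k * ∑ i ∈ Finset.univ.filter (fun i => k ∈ Sched i), schedProb Sched α x i

/-- The capacity region: vectors `φ` with `φ_k = φ̂_k ∑_{i : k ∈ S_i} p_i`
for some probability vector `p`. -/
def CapacityRegion {K N : ℕ} (Sched : Fin N → Finset (Fin K)) (φhat : Fin K → ℝ) :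
    Set (Fin K → ℝ) :=
  {φ | ∃ p : Fin N → ℝ, (∀ i, 0 ≤ p i) ∧ (∑ i, p i) = 1 ∧
    ∀ k, φ k = φhat k * ∑ i ∈ Finset.univ.filter (fun i => k ∈ Sched i), p i}

/-- Lyapunov function `F(x) = ∑_{k : x_k > 0} (σ_k/φ̂_k) x_k (log(α_k x_k) - 1)`. -/
noncomputable def F {K : ℕ} (α φhat σ : Fin K → ℝ) (x : Fin K → ℕ) : ℝ :=
  ∑ k ∈ Finset.univ.filter (fun k => 0 < x k),
    (σ k / φhat k) * (x k : ℝ) * (Real.log (α k * (x k : ℝ)) - 1)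

/-- The drift `ΔF(x)` of the flow-level Markov process. -/
noncomputable def drift {K N : ℕ} (Sched : Fin N → Finset (Fin K)) (α φhat lam σ : Fin K → ℝ)
    (x : Fin K → ℕ) : ℝ :=
  ∑ k, lam k * (F α φhat σ (Function.update x k (x k + 1)) - F α φhat σ x) +
    ∑ k ∈ Finset.univ.filter (fun k => 0 < x k),
      (throughput Sched α φhat x k / σ k) *
        (F α φhat σ (Function.update x k (x k - 1)) - F α φhat σ x)

/-!
Each term of the Lyapunov function is an antiderivative of `log (α_k t)`, so an arrival or a
departure at link `k` changes `F` by `± (σ_k / φ̂_k) log (α_k x_k)` up to a bounded error. Hence the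
drift is, up to a constant, at most `∑ k, (ρ_k / φ̂_k - θ_k(x)) log (α_k x_k)`, where `θ_k(x)` is
the fraction of time link `k` is active. As schedules of busy links are drawn proportionally to
`exp (∑ k ∈ S_i, log (α_k x_k))`, Gibbs' inequality shows that CSMA maximises the linear form
`θ ↦ ∑ k, θ_k log (α_k x_k)` over all schedule distributions up to the additive error `N`. If `ρ` is
interior, some distribution serves every link at normalised rate `ρ_k / φ̂_k + ε`, and comparison
with it leaves `ΔF(x) ≤ C - ε ∑ k, log (α_k x_k) → -∞`.
-/

open Filter Finset Real Topology

lemma exists_pos_add_smul_mem_of_mem_interior {E : Type*} [AddCommGroup E] [Module ℝ E]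
    [TopologicalSpace E] [ContinuousAdd E] [ContinuousSMul ℝ E] {s : Set E} {x : E}
    (hx : x ∈ interior s) (v : E) : ∃ ε : ℝ, 0 < ε ∧ x + ε • v ∈ s := by
  have hcont : Tendsto (fun t : ℝ => x + t • v) (𝓝[>] 0) (𝓝 x) := by
    have h : Continuous fun t : ℝ => x + t • v := by fun_prop
    simpa only [zero_smul, add_zero] using (h.tendsto 0).mono_left nhdsWithin_le_nhds
  have hs : ∀ᶠ t : ℝ in 𝓝[>] 0, x + t • v ∈ s := hcont (mem_interior_iff_mem_nhds.1 hx)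
  exact (eventually_mem_nhdsWithin.and hs).exists

lemma tendsto_sum_apply_cofinite_atTop {κ M : Type*} [Fintype κ] {X : κ → Type*}
    [∀ k, Nonempty (X k)] [AddCommGroup M] [LinearOrder M] [IsOrderedAddMonoid M]
    {f : ∀ k, X k → M} (hf : ∀ k, Tendsto (f k) cofinite atTop) :
    Tendsto (fun x : ∀ k, X k => ∑ k, f k (x k)) cofinite atTop := by
  classical
  choose m hm using fun k => (hf k).exists_forall_le
  rw [← coprodᵢ_cofinite, Filter.coprodᵢ, tendsto_iSup]
  intro k
  refine tendsto_atTop_mono (fun x => ?_) (tendsto_atTop_add_const_right _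
    (∑ j ∈ univ.erase k, f j (m j)) ((hf k).comp tendsto_comap))
  rw [← add_sum_erase univ _ (mem_univ k)]
  gcongr with j
  · exact le_rfl
  · exact hm j _

/-- **Gibbs' inequality**: equivalently, the entropy of the normalised weights is at most `#s`, a
crude form of the sharp bound `log #s`. -/
lemma log_sum_sub_card_le_sum_div_mul_log {ι : Type*} {s : Finset ι} {w : ι → ℝ}
    (hw : ∀ i ∈ s, 0 ≤ w i) (hsum : 0 < ∑ i ∈ s, w i) :
    log (∑ i ∈ s, w i) - #s ≤ ∑ i ∈ s, w i / (∑ j ∈ s, w j) * log (w i) := by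
  set Z := ∑ i ∈ s, w i
  have entropy_term (i : ι) (hi : i ∈ s) : w i / Z * log Z - 1 ≤ w i / Z * log (w i) := by
    rcases (hw i hi).eq_or_lt with h0 | hpos
    · simp [← h0]
    have hq : 0 ≤ w i / Z := by positivity
    have hlog := self_sub_one_le_mul_log hq
    rw [log_div hpos.ne' hsum.ne'] at hlog
    linarith
  calc log Z - #s = ∑ i ∈ s, (w i / Z * log Z - 1) := by
        rw [sum_sub_distrib, ← sum_mul, ← sum_div, div_self hsum.ne']
        simp
    _ ≤ ∑ i ∈ s, w i / Z * log (w i) := sum_le_sum entropy_term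

/-- The contribution of a link with `n` flows and parameter `a` to the Lyapunov function `F`,
without its factor `σ_k / φ̂_k`. It vanishes at `n = 0`, so `F` is a sum over all links. -/
noncomputable def lyapunovTerm (a : ℝ) (n : ℕ) : ℝ :=
  n * (log (a * n) - 1)

lemma lyapunovTerm_succ_sub_le {a : ℝ} (ha : 0 < a) (n : ℕ) :
    lyapunovTerm a (n + 1) - lyapunovTerm a n ≤ log (a * n) + (|log a| + 1) := by
  rcases n.eq_zero_or_pos with rfl | hn
  · have := le_abs_self (log a)
    simp only [lyapunovTerm, zero_add, Nat.cast_one, Nat.cast_zero, mul_one, mul_zero, zero_mul,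
      log_zero]
    linarith
  have hn1 : (1 : ℝ) ≤ n := by exact_mod_cast hn
  have hlog : log (a * (n + 1)) - log (a * n) ≤ 1 / n := by
    rw [← log_div (by positivity) (by positivity)]
    refine (log_le_sub_one_of_pos (by positivity)).trans_eq ?_
    field_simp
    ring
  have hquot : ((n : ℝ) + 1) * (1 / n) ≤ 2 := by
    rw [mul_one_div, div_le_iff₀ (by positivity)]
    linarith
  calc lyapunovTerm a (n + 1) - lyapunovTerm a n
      = (n + 1) * (log (a * (n + 1)) - log (a * n)) + log (a * n) - 1 := by
        simp only [lyapunovTerm, Nat.cast_succ]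
        ring
    _ ≤ (n + 1) * (1 / n) + log (a * n) - 1 := by gcongr
    _ ≤ log (a * n) + (|log a| + 1) := by linarith [abs_nonneg (log a)]

lemma lyapunovTerm_pred_sub_le {a : ℝ} (ha : 0 < a) (n : ℕ) :
    lyapunovTerm a (n - 1) - lyapunovTerm a n ≤ 1 - log (a * n) := by
  rcases n with _ | m
  -- At `n = 0` the truncated `n - 1` and `log 0 = 0` reduce the claim to `0 ≤ 1`.
  · simp [lyapunovTerm]
  have hlog : (m : ℝ) * log (a * m) ≤ m * log (a * (m + 1)) := by
    rcases m.eq_zero_or_pos with rfl | hm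
    · simp
    gcongr
    linarith
  simp only [lyapunovTerm, Nat.add_sub_cancel, Nat.cast_succ]
  linarith

lemma F_eq_sum_lyapunovTerm {K : ℕ} (α φhat σ : Fin K → ℝ) (x : Fin K → ℕ) :
    F α φhat σ x = ∑ k, σ k / φhat k * lyapunovTerm (α k) (x k) := by
  simp only [F, mul_assoc]
  refine sum_filter_of_ne fun k _ hk => Nat.pos_of_ne_zero fun h0 => hk ?_
  simp [h0]

lemma F_update_sub {K : ℕ} (α φhat σ : Fin K → ℝ) (x : Fin K → ℕ) (k : Fin K) (n : ℕ) :
    F α φhat σ (Function.update x k n) - F α φhat σ x =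
      σ k / φhat k * (lyapunovTerm (α k) n - lyapunovTerm (α k) (x k)) := by
  rw [F_eq_sum_lyapunovTerm, F_eq_sum_lyapunovTerm, ← sum_sub_distrib, Fintype.sum_eq_single k]
  · rw [Function.update_self, mul_sub]
  · intro j hj
    rw [Function.update_of_ne hj, sub_self]

section ActiveFraction

variable {ι κ : Type*} [Fintype ι] [DecidableEq κ]

/-- The fraction of time link `k` is active when schedule `i` is used a fraction `p i` of the time.
It is the throughput of the link relative to its physical rate. -/
def activeFraction (Sched : ι → Finset κ) (p : ι → ℝ) (k : κ) : ℝ :=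
  ∑ i with k ∈ Sched i, p i

lemma activeFraction_nonneg (Sched : ι → Finset κ) {p : ι → ℝ} (hp : p ∈ stdSimplex ℝ ι) (k : κ) :
    0 ≤ activeFraction Sched p k :=
  sum_nonneg fun i _ => hp.1 i

lemma activeFraction_le_one (Sched : ι → Finset κ) {p : ι → ℝ} (hp : p ∈ stdSimplex ℝ ι) (k : κ) :
    activeFraction Sched p k ≤ 1 :=
  (sum_le_univ_sum_of_nonneg hp.1).trans_eq hp.2

lemma sum_activeFraction_mul [Fintype κ] (Sched : ι → Finset κ) (p : ι → ℝ) (L : κ → ℝ) :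
    ∑ k, activeFraction Sched p k * L k = ∑ i, p i * ∑ k ∈ Sched i, L k := by
  simp only [activeFraction, sum_mul, mul_sum]
  exact sum_comm' fun k i => by simp

end ActiveFraction

/-- The logarithmic load `log (α_k x_k)` of link `k`, with value `0` at an idle link because
`log 0 = 0`. -/
noncomputable def logLoad {κ : Type*} (α : κ → ℝ) (x : κ → ℕ) (k : κ) : ℝ :=
  log (α k * x k)

lemma tendsto_sum_logLoad {κ : Type*} [Fintype κ] {α : κ → ℝ} (hα : ∀ k, 0 < α k) :
    Tendsto (fun x : κ → ℕ => ∑ k, logLoad α x k) cofinite atTop := by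
  refine tendsto_sum_apply_cofinite_atTop (f := fun k (n : ℕ) => log (α k * n)) fun k => ?_
  rw [Nat.cofinite_eq_atTop]
  exact tendsto_log_atTop.comp (tendsto_natCast_atTop_atTop.const_mul_atTop (hα k))

lemma empty_mem_range_of_isLowerSet {ι κ : Type*} [Fintype ι] {Sched : ι → Finset κ}
    (hSched : IsLowerSet (Set.range Sched)) {p : ι → ℝ} (hp : p ∈ stdSimplex ℝ ι) :
    ∅ ∈ Set.range Sched := by
  obtain ⟨i, -, -⟩ := exists_ne_zero_of_sum_ne_zero (hp.2.trans_ne one_ne_zero)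
  exact hSched (empty_subset (Sched i)) ⟨i, rfl⟩

section Gibbs

variable {K N : ℕ} {Sched : Fin N → Finset (Fin K)} {α : Fin K → ℝ}

lemma schedWeight_nonneg (Sched : Fin N → Finset (Fin K)) (hα : ∀ k, 0 < α k) (x : Fin K → ℕ)
    (i : Fin N) : 0 ≤ schedWeight Sched α x i :=
  prod_nonneg fun k _ => mul_nonneg (hα k).le (x k).cast_nonneg

lemma log_schedWeight {x : Fin K → ℕ} {i : Fin N} (h : schedWeight Sched α x i ≠ 0) :
    log (schedWeight Sched α x i) = ∑ k ∈ Sched i, logLoad α x k :=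
  log_prod (prod_ne_zero_iff.1 h)

lemma sum_schedWeight_pos (hempty : ∅ ∈ Set.range Sched) (hα : ∀ k, 0 < α k) (x : Fin K → ℕ) :
    0 < ∑ i, schedWeight Sched α x i := by
  obtain ⟨i, hi⟩ := hempty
  refine sum_pos' (fun j _ => schedWeight_nonneg Sched hα x j) ⟨i, mem_univ i, ?_⟩
  rw [schedWeight, hi, prod_empty]
  exact one_pos

lemma schedProb_mem_stdSimplex (hempty : ∅ ∈ Set.range Sched) (hα : ∀ k, 0 < α k)
    (x : Fin K → ℕ) : schedProb Sched α x ∈ stdSimplex ℝ (Fin N) := by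
  have hZ := sum_schedWeight_pos hempty hα x
  refine ⟨fun i => div_nonneg (schedWeight_nonneg Sched hα x i) hZ.le, ?_⟩
  simp only [schedProb]
  rw [← sum_div, div_self hZ.ne']

lemma sum_logLoad_le_log_sum_schedWeight (hSched : IsLowerSet (Set.range Sched))
    (hα : ∀ k, 0 < α k) (x : Fin K → ℕ) (i : Fin N) :
    ∑ k ∈ Sched i, logLoad α x k ≤ log (∑ j, schedWeight Sched α x j) := by
  -- Idle links contribute nothing to the left-hand side, and dropping them leaves a schedule of
  -- positive weight.
  obtain ⟨j, hj⟩ := hSched (filter_subset (fun k => 0 < x k) (Sched i)) ⟨i, rfl⟩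
  have hpos : 0 < schedWeight Sched α x j := by
    refine prod_pos fun k hk => mul_pos (hα k) (Nat.cast_pos.2 ?_)
    rw [hj] at hk
    exact (mem_filter.1 hk).2
  calc ∑ k ∈ Sched i, logLoad α x k = ∑ k ∈ Sched j, logLoad α x k := by
        rw [hj]
        refine (sum_filter_of_ne fun k _ hk => Nat.pos_of_ne_zero fun h0 => hk ?_).symm
        simp [logLoad, h0]
    _ = log (schedWeight Sched α x j) := (log_schedWeight hpos.ne').symm
    _ ≤ log (∑ j, schedWeight Sched α x j) := log_le_log hpos <|
        single_le_sum (fun i _ => schedWeight_nonneg Sched hα x i) (mem_univ j)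

lemma log_sum_schedWeight_sub_le (hempty : ∅ ∈ Set.range Sched) (hα : ∀ k, 0 < α k)
    (x : Fin K → ℕ) :
    log (∑ i, schedWeight Sched α x i) - N ≤
      ∑ i, schedProb Sched α x i * ∑ k ∈ Sched i, logLoad α x k := by
  have hgibbs := log_sum_sub_card_le_sum_div_mul_log
    (fun i (_ : i ∈ univ) => schedWeight_nonneg Sched hα x i) (sum_schedWeight_pos hempty hα x)
  rw [card_univ, Fintype.card_fin] at hgibbs
  refine hgibbs.trans_eq (sum_congr rfl fun i _ => ?_)
  rcases eq_or_ne (schedWeight Sched α x i) 0 with h0 | h0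
  · simp [schedProb, h0]
  · rw [schedProb, log_schedWeight h0]

lemma sum_activeFraction_mul_logLoad_le (hSched : IsLowerSet (Set.range Sched))
    (hα : ∀ k, 0 < α k) {p : Fin N → ℝ} (hp : p ∈ stdSimplex ℝ (Fin N)) (x : Fin K → ℕ) :
    ∑ k, activeFraction Sched p k * logLoad α x k ≤
      ∑ k, activeFraction Sched (schedProb Sched α x) k * logLoad α x k + N := by
  rw [sum_activeFraction_mul, sum_activeFraction_mul]
  set Z := ∑ i, schedWeight Sched α x i
  have hmax : ∑ i, p i * ∑ k ∈ Sched i, logLoad α x k ≤ log Z :=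
    calc ∑ i, p i * ∑ k ∈ Sched i, logLoad α x k ≤ ∑ i, p i * log Z :=
          sum_le_sum fun i _ => mul_le_mul_of_nonneg_left
            (sum_logLoad_le_log_sum_schedWeight hSched hα x i) (hp.1 i)
      _ = log Z := by rw [← sum_mul, hp.2, one_mul]
  linarith [log_sum_schedWeight_sub_le (empty_mem_range_of_isLowerSet hSched hp) hα x]

end Gibbs

section Drift

variable {K N : ℕ} {Sched : Fin N → Finset (Fin K)} {α φhat lam σ : Fin K → ℝ}

lemma arrival_drift_le {k : Fin K} (hα : 0 < α k) (hφ : 0 ≤ φhat k) (hlam : 0 ≤ lam k)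
    (hσ : 0 ≤ σ k) (x : Fin K → ℕ) :
    lam k * (F α φhat σ (Function.update x k (x k + 1)) - F α φhat σ x) ≤
      lam k * σ k / φhat k * (logLoad α x k + (|log (α k)| + 1)) := by
  have hload : 0 ≤ lam k * σ k / φhat k := by positivity
  rw [F_update_sub, ← mul_assoc, ← mul_div_assoc]
  exact mul_le_mul_of_nonneg_left (lyapunovTerm_succ_sub_le hα (x k)) hload

lemma departure_drift_le (hempty : ∅ ∈ Set.range Sched) (hα : ∀ k, 0 < α k)
    {k : Fin K} (hφ : φhat k ≠ 0) (hσ : σ k ≠ 0) (x : Fin K → ℕ) :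
    throughput Sched α φhat x k / σ k *
        (F α φhat σ (Function.update x k (x k - 1)) - F α φhat σ x) ≤
      1 - activeFraction Sched (schedProb Sched α x) k * logLoad α x k := by
  have hprob := schedProb_mem_stdSimplex hempty hα x
  set θ := activeFraction Sched (schedProb Sched α x) k
  have hthroughput : throughput Sched α φhat x k = φhat k * θ := rfl
  calc throughput Sched α φhat x k / σ k *
        (F α φhat σ (Function.update x k (x k - 1)) - F α φhat σ x)
      = θ * (lyapunovTerm (α k) (x k - 1) - lyapunovTerm (α k) (x k)) := by
        rw [F_update_sub, hthroughput]
        field_simp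
    _ ≤ θ * (1 - logLoad α x k) := mul_le_mul_of_nonneg_left
        (lyapunovTerm_pred_sub_le (hα k) (x k)) (activeFraction_nonneg Sched hprob k)
    _ ≤ 1 - θ * logLoad α x k := by linarith [activeFraction_le_one Sched hprob k]

lemma drift_eq_sum (Sched : Fin N → Finset (Fin K)) (α φhat lam σ : Fin K → ℝ) (x : Fin K → ℕ) :
    drift Sched α φhat lam σ x =
      ∑ k, (lam k * (F α φhat σ (Function.update x k (x k + 1)) - F α φhat σ x) +
        throughput Sched α φhat x k / σ k *
          (F α φhat σ (Function.update x k (x k - 1)) - F α φhat σ x)) := by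
  rw [drift, sum_add_distrib]
  congr 1
  refine sum_filter_of_ne fun k _ hk => Nat.pos_of_ne_zero fun h0 => hk ?_
  rw [F_update_sub, h0, Nat.zero_sub, sub_self, mul_zero, mul_zero]

lemma drift_le (hempty : ∅ ∈ Set.range Sched) (hα : ∀ k, 0 < α k) (hφ : ∀ k, 0 < φhat k)
    (hlam : ∀ k, 0 ≤ lam k) (hσ : ∀ k, 0 < σ k) (x : Fin K → ℕ) :
    drift Sched α φhat lam σ x ≤
      ∑ k, (lam k * σ k / φhat k - activeFraction Sched (schedProb Sched α x) k) * logLoad α x k +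
        ∑ k, (lam k * σ k / φhat k * (|log (α k)| + 1) + 1) := by
  rw [drift_eq_sum, ← sum_add_distrib]
  refine sum_le_sum fun k _ => ?_
  linarith [arrival_drift_le (hα k) (hφ k).le (hlam k) (hσ k).le x,
    departure_drift_le hempty hα (hφ k).ne' (hσ k).ne' x]

lemma exists_activeFraction_eq_div_add {ρ : Fin K → ℝ} (hφ : ∀ k, φhat k ≠ 0)
    (hint : ρ ∈ interior (CapacityRegion Sched φhat)) :
    ∃ p ∈ stdSimplex ℝ (Fin N), ∃ ε > 0, ∀ k, activeFraction Sched p k = ρ k / φhat k + ε := by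
  obtain ⟨ε, hε, p, hp0, hp1, hp⟩ := exists_pos_add_smul_mem_of_mem_interior hint φhat
  refine ⟨p, ⟨hp0, hp1⟩, ε, hε, fun k => ?_⟩
  have hk : ρ k + ε * φhat k = φhat k * activeFraction Sched p k := hp k
  have hφk := hφ k
  field_simp
  linarith

lemma exists_drift_le_sub_mul_sum_logLoad (hSched : IsLowerSet (Set.range Sched))
    (hα : ∀ k, 0 < α k) (hφ : ∀ k, 0 < φhat k) (hlam : ∀ k, 0 ≤ lam k) (hσ : ∀ k, 0 < σ k)
    (hint : (fun k => lam k * σ k) ∈ interior (CapacityRegion Sched φhat)) :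
    ∃ C : ℝ, ∃ ε > 0, ∀ x, drift Sched α φhat lam σ x ≤ C - ε * ∑ k, logLoad α x k := by
  obtain ⟨p, hp, ε, hε, hslack⟩ := exists_activeFraction_eq_div_add (fun k => (hφ k).ne') hint
  refine ⟨N + ∑ k, (lam k * σ k / φhat k * (|log (α k)| + 1) + 1), ε, hε, fun x => ?_⟩
  have hdrift := drift_le (empty_mem_range_of_isLowerSet hSched hp) hα hφ hlam hσ x
  have hsplit : ∑ k, (lam k * σ k / φhat k - activeFraction Sched (schedProb Sched α x) k) *
        logLoad α x k =
      ∑ k, activeFraction Sched p k * logLoad α x k -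
        ∑ k, activeFraction Sched (schedProb Sched α x) k * logLoad α x k -
        ε * ∑ k, logLoad α x k := by
    rw [mul_sum, ← sum_sub_distrib, ← sum_sub_distrib]
    refine sum_congr rfl fun k _ => ?_
    rw [hslack]
    ring
  linarith [sum_activeFraction_mul_logLoad_le hSched hα hp x]

end Drift

lemma isLowerSet_range_of_feasible {K : ℕ} {ι : Type*} {conflict : Fin K → Fin K → Prop}
    {Sched : ι → Finset (Fin K)} (hfeas : ∀ i, Feasible conflict (Sched i))
    (hsurj : ∀ S, Feasible conflict S → ∃ i, Sched i = S) : IsLowerSet (Set.range Sched) := by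
  rintro _ T hT ⟨i, rfl⟩
  exact hsurj T fun k hk l hl => hfeas i k (hT hk) l (hT hl)

theorem foster_drift_condition_general {K N : ℕ} {Sched : Fin N → Finset (Fin K)}
    (hSched : IsLowerSet (Set.range Sched)) {α φhat lam σ : Fin K → ℝ} (hα : ∀ k, 0 < α k)
    (hφ : ∀ k, 0 < φhat k) (hlam : ∀ k, 0 ≤ lam k) (hσ : ∀ k, 0 < σ k)
    (hint : (fun k => lam k * σ k) ∈ interior (CapacityRegion Sched φhat)) :
    Tendsto (drift Sched α φhat lam σ) cofinite atBot := by
  obtain ⟨C, ε, hε, hdrift⟩ := exists_drift_le_sub_mul_sum_logLoad hSched hα hφ hlam hσ hint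
  refine tendsto_atBot_mono hdrift ?_
  simp only [sub_eq_add_neg]
  exact tendsto_atBot_add_const_left _ C
    (tendsto_neg_atTop_atBot.comp ((tendsto_sum_logLoad hα).const_mul_atTop hε))

/-- Foster drift condition (Theorem 1, optimality of flow-aware CSMA): if the vector of
traffic intensities `ρ = (λ_1 σ_1, …, λ_K σ_K)` lies in the interior of the capacity region,
then there exist `δ > 0` and a finite set `A ⊆ ℕ^K` such that `ΔF(x) ≤ -δ` for all `x ∉ A`. -/
theorem foster_drift_condition
    {K N : ℕ} (hK : 0 < K) (hN : 0 < N)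
    (conflict : Fin K → Fin K → Prop)
    (hsymm : ∀ k l, conflict k l → conflict l k)
    (Sched : Fin N → Finset (Fin K))
    (hfeas : ∀ i, Feasible conflict (Sched i))
    (hinj : Function.Injective Sched)
    (hsurj : ∀ S : Finset (Fin K), Feasible conflict S → ∃ i, Sched i = S)
    (hS0 : Sched ⟨0, hN⟩ = ∅)
    (α φhat lam σ : Fin K → ℝ)
    (hα : ∀ k, 0 < α k) (hφ : ∀ k, 0 < φhat k)
    (hlam : ∀ k, 0 < lam k) (hσ : ∀ k, 0 < σ k)
    (ρ : Fin K → ℝ) (hρ : ∀ k, ρ k = lam k * σ k)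
    (hint : ρ ∈ interior (CapacityRegion Sched φhat)) :
    ∃ δ : ℝ, 0 < δ ∧ ∃ A : Set (Fin K → ℕ), A.Finite ∧
      ∀ x ∉ A, drift Sched α φhat lam σ x ≤ -δ := by
  obtain rfl : ρ = fun k => lam k * σ k := funext hρ
  have hdrift := foster_drift_condition_general (isLowerSet_range_of_feasible hfeas hsurj) hα hφ
    (fun k => (hlam k).le) hσ hint
  exact ⟨1, one_pos, _, hdrift.eventually_le_atBot (-1), fun x hx => not_not.1 hx⟩

end FlowCSMA
end

section
/- Strictly positive representation of interior points of the capacity region: if ρ ∈ ℝ^K lies in the interior of the capacity region, then there exist ε ∈ (0, 1/2) and a probability vector (q_1,…,q_N) with q_i > 0 for every i = 1,…,N such that ρ_k = (1 − 2ε) φ̂_k Σ_{i: k ∈ S_i} q_i for all k = 1,…,K. -/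
open scoped BigOperators

namespace FlowCSMA

/-! For small `ε` the rescaled point `(1 - 2ε)⁻¹ ρ` is still interior, so it suffices to represent
interior points by strictly positive weights. The region is the image of a simplex under a linear
map. Moving an interior point slightly away from the image of the barycenter `c` stays in the
region, hence gives the image of some `p` in the simplex; the original point is then the image of a
weight vector strictly between `c` and `p`, and such a vector has no zero entry. -/

open Filter Topology

section StdSimplex

variable {𝕜 E ι : Type*} [Field 𝕜] [LinearOrder 𝕜] [IsStrictOrderedRing 𝕜]

theorem pos_of_mem_openSegment {c p q : ι → 𝕜} (hc : ∀ i, 0 < c i) (hp : ∀ i, 0 ≤ p i)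
    (hq : q ∈ openSegment 𝕜 c p) (i : ι) : 0 < q i := by
  obtain ⟨a, b, ha, hb, -, rfl⟩ := hq
  exact add_pos_of_pos_of_nonneg (mul_pos ha (hc i)) (mul_nonneg hb.le (hp i))

variable [TopologicalSpace 𝕜] [OrderTopology 𝕜] [AddCommGroup E] [Module 𝕜 E]
  [TopologicalSpace E] [IsTopologicalAddGroup E] [ContinuousSMul 𝕜 E]

theorem exists_mem_openSegment_of_mem_interior {s : Set E} {x : E} (c : E)
    (hx : x ∈ interior s) : ∃ y ∈ s, x ∈ openSegment 𝕜 c y := by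
  have hnear : ∀ᶠ δ in 𝓝[>] (1 : 𝕜), AffineMap.homothety c δ x ∈ s :=
    (eventually_homothety_mem_of_mem_interior 𝕜 c hx).filter_mono nhdsWithin_le_nhds
  obtain ⟨δ, hδs, hδ : 1 < δ⟩ := (hnear.and self_mem_nhdsWithin).exists
  have hδ0 : 0 < δ := zero_lt_one.trans hδ
  refine ⟨AffineMap.homothety c δ x, hδs, ?_⟩
  have hback : AffineMap.lineMap c (AffineMap.homothety c δ x) δ⁻¹ = x := by
    simp [AffineMap.lineMap_apply, AffineMap.homothety_apply, hδ0.ne']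
  simpa only [hback] using lineMap_mem_openSegment 𝕜 c (AffineMap.homothety c δ x)
    ⟨inv_pos.2 hδ0, inv_lt_one_of_one_lt₀ hδ⟩

theorem interior_image_stdSimplex_subset [Fintype ι] (T : (ι → 𝕜) →ᵃ[𝕜] E) :
    interior (T '' stdSimplex 𝕜 ι) ⊆ T '' {q ∈ stdSimplex 𝕜 ι | ∀ i, 0 < q i} := by
  rcases isEmpty_or_nonempty ι
  · simp [stdSimplex_of_isEmpty_index]
  intro x hx
  let c : stdSimplex 𝕜 ι := stdSimplex.barycenter
  have hc : ∀ i, 0 < c.1 i := fun i => inv_pos.2 (Nat.cast_pos.2 Fintype.card_pos)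
  obtain ⟨-, ⟨p, hp, rfl⟩, hxp⟩ := exists_mem_openSegment_of_mem_interior (𝕜 := 𝕜) (T c.1) hx
  rw [← image_openSegment] at hxp
  obtain ⟨q, hq, rfl⟩ := hxp
  exact ⟨q, ⟨(convex_stdSimplex 𝕜 ι).openSegment_subset c.2 hp hq,
    pos_of_mem_openSegment hc hp.1 hq⟩, rfl⟩

end StdSimplex

section CapacityRegion

variable {K N : ℕ} (Sched : Fin N → Finset (Fin K)) (φhat : Fin K → ℝ)

/-- The vector of long-run link rates `φ̂_k ∑_{i : k ∈ S_i} p_i` as a linear function of the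
schedule weights `p`. Weights are arbitrary real vectors, so that the capacity region is the image
of the standard simplex. -/
def rateMap : (Fin N → ℝ) →ₗ[ℝ] (Fin K → ℝ) :=
  LinearMap.pi fun k => φhat k • ∑ i with k ∈ Sched i, LinearMap.proj i

theorem rateMap_apply (p : Fin N → ℝ) (k : Fin K) :
    rateMap Sched φhat p k = φhat k * ∑ i with k ∈ Sched i, p i := by
  simp [rateMap]

theorem capacityRegion_eq_image_stdSimplex :
    CapacityRegion Sched φhat = rateMap Sched φhat '' stdSimplex ℝ (Fin N) := by
  ext φ
  simp only [CapacityRegion, stdSimplex, Set.mem_image, Set.mem_ofPred_eq, funext_iff,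
    rateMap_apply, and_assoc, eq_comm]

theorem interior_capacityRegion_subset :
    interior (CapacityRegion Sched φhat) ⊆
      rateMap Sched φhat '' {q ∈ stdSimplex ℝ (Fin N) | ∀ i, 0 < q i} := by
  rw [capacityRegion_eq_image_stdSimplex]
  exact interior_image_stdSimplex_subset (rateMap Sched φhat).toAffineMap

theorem interior_strictly_positive_representation_general
    {ρ : Fin K → ℝ} (hint : ρ ∈ interior (CapacityRegion Sched φhat)) :
    ∀ᶠ ε in 𝓝 (0 : ℝ), ∃ q : Fin N → ℝ, (∀ i, 0 < q i) ∧ ∑ i, q i = 1 ∧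
      ∀ k, ρ k = (1 - 2 * ε) * φhat k * ∑ i with k ∈ Sched i, q i := by
  have hscale : Tendsto (fun ε : ℝ => (1 - 2 * ε)⁻¹ • ρ) (𝓝 0) (𝓝 ρ) := by
    have hcont : ContinuousAt (fun ε : ℝ => (1 - 2 * ε)⁻¹ • ρ) 0 := by
      fun_prop (disch := norm_num)
    simpa using hcont.tendsto
  filter_upwards [hscale.eventually_mem (isOpen_interior.mem_nhds hint),
    eventually_lt_nhds (one_half_pos (α := ℝ))] with ε hεint hε
  obtain ⟨q, ⟨hq, hqpos⟩, hrate⟩ := interior_capacityRegion_subset Sched φhat hεint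
  have hε0 : 1 - 2 * ε ≠ 0 := by linarith
  refine ⟨q, hqpos, hq.2, fun k => ?_⟩
  rw [mul_assoc, ← rateMap_apply, hrate, Pi.smul_apply, smul_eq_mul, mul_inv_cancel_left₀ hε0]

end CapacityRegion

/-- Strictly positive representation of interior points of the capacity region: if `ρ` lies
in the interior of the capacity region, then there exist `ε ∈ (0, 1/2)` and a probability
vector `(q_1,…,q_N)` with `q_i > 0` for every `i` such that
`ρ_k = (1 - 2ε) φ̂_k ∑_{i : k ∈ S_i} q_i` for all `k`. -/
theorem interior_strictly_positive_representation
    {K N : ℕ} (hK : 0 < K) (hN : 0 < N)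
    (conflict : Fin K → Fin K → Prop)
    (hsymm : ∀ k l, conflict k l → conflict l k)
    (Sched : Fin N → Finset (Fin K))
    (hfeas : ∀ i, Feasible conflict (Sched i))
    (hinj : Function.Injective Sched)
    (hsurj : ∀ S : Finset (Fin K), Feasible conflict S → ∃ i, Sched i = S)
    (hS0 : Sched ⟨0, hN⟩ = ∅)
    (φhat : Fin K → ℝ) (hφ : ∀ k, 0 < φhat k)
    (ρ : Fin K → ℝ)
    (hint : ρ ∈ interior (CapacityRegion Sched φhat)) :
    ∃ ε : ℝ, 0 < ε ∧ ε < 1 / 2 ∧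
      ∃ q : Fin N → ℝ, (∀ i, 0 < q i) ∧ (∑ i, q i) = 1 ∧
        ∀ k, ρ k = (1 - 2 * ε) * φhat k *
          ∑ i ∈ Finset.univ.filter (fun i => k ∈ Sched i), q i := by
  obtain ⟨ε, hq, hε0, hε⟩ :=
    ((interior_strictly_positive_representation_general Sched φhat hint).filter_mono
      nhdsWithin_le_nhds |>.and (Ioo_mem_nhdsGT one_half_pos)).exists
  exact ⟨ε, hε0, hε, hq⟩

end FlowCSMA
end

section
/- Mean throughput of a single link under flow-aware CSMA with α_1 = 1: for ρ ∈ (0,1), the stationary distribution π(n) ∝ (n+1)ρⁿ on ℕ (that of a processor-sharing queue with one permanent customer) has mean Σ_{n≥0} n π(n) / Σ_{n≥0} π(n) = Σ_{n≥0} n(n+1)ρⁿ / Σ_{n≥0} (n+1)ρⁿ = 2ρ/(1−ρ); consequently the mean throughput γ_1 = ρ / (2ρ/(1−ρ)) equals (1−ρ)/2. -/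
open scoped BigOperators

namespace FlowCSMA

/-!
The weights `C(n + k, k) ρⁿ` are those of a processor-sharing queue with `k` permanent customers
(an unnormalized negative binomial distribution); the link with `α_1 = 1` is the case `k = 1`.
Absorption, `n C(n + k, k) = (k + 1) C(n + k, k + 1)`, turns the first moment for `k` into
`(k + 1) ρ` times the total mass for `k + 1`, and by the negative binomial series the total mass
is multiplied by `1 / (1 - ρ)` when `k` increases by one.
-/

lemma mul_add_choose_eq_succ_mul_add_choose_succ (n k : ℕ) :
    n * (n + k).choose k = (k + 1) * (n + k).choose (k + 1) := by
  rw [mul_comm (k + 1), Nat.choose_succ_right_eq, Nat.add_sub_cancel, mul_comm]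

section NegativeBinomial

variable {𝕜 : Type*} [NormedDivisionRing 𝕜] {r : 𝕜}

lemma hasSum_choose_succ_mul_geometric_of_norm_lt_one (k : ℕ) (hr : ‖r‖ < 1) :
    HasSum (fun n : ℕ ↦ ((n + k).choose (k + 1) : 𝕜) * r ^ n) (r / (1 - r) ^ (k + 2)) := by
  have vanishes_at_zero : ((0 + k).choose (k + 1) : 𝕜) * r ^ 0 = 0 := by
    rw [zero_add, Nat.choose_succ_self, Nat.cast_zero, zero_mul]
  have shift (n : ℕ) : ((n + 1 + k).choose (k + 1) : 𝕜) * r ^ (n + 1) =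
      r * (((n + (k + 1)).choose (k + 1) : 𝕜) * r ^ n) := by
    rw [pow_succ', ← mul_assoc, Nat.cast_comm, mul_assoc, add_right_comm, add_assoc n k 1]
  rw [← hasSum_nat_add_iff' 1, Finset.sum_range_one, vanishes_at_zero, sub_zero]
  simpa only [shift, mul_one_div] using
    (hasSum_choose_mul_geometric_of_norm_lt_one (k + 1) hr).mul_left r

lemma hasSum_coe_mul_choose_mul_geometric_of_norm_lt_one (k : ℕ) (hr : ‖r‖ < 1) :
    HasSum (fun n : ℕ ↦ (n : 𝕜) * ((n + k).choose k : 𝕜) * r ^ n)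
      ((k + 1) * (r / (1 - r) ^ (k + 2))) := by
  have absorption (n : ℕ) :
      (n : 𝕜) * ((n + k).choose k : 𝕜) = (k + 1) * ((n + k).choose (k + 1) : 𝕜) := by
    exact_mod_cast congrArg (Nat.cast : ℕ → 𝕜) (mul_add_choose_eq_succ_mul_add_choose_succ n k)
  simpa only [absorption, mul_assoc] using
    (hasSum_choose_succ_mul_geometric_of_norm_lt_one k hr).mul_left ((k : 𝕜) + 1)

lemma tsum_coe_mul_choose_mul_geometric_div_tsum_of_norm_lt_one (k : ℕ) (hr : ‖r‖ < 1) :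
    (∑' n : ℕ, (n : 𝕜) * ((n + k).choose k : 𝕜) * r ^ n) /
      (∑' n : ℕ, ((n + k).choose k : 𝕜) * r ^ n) = (k + 1) * r / (1 - r) := by
  have one_sub_ne_zero : 1 - r ≠ 0 :=
    sub_ne_zero.mpr (by rintro rfl; exact norm_one.not_lt hr)
  calc _ = (k + 1) * (r / (1 - r) ^ (k + 2)) / (1 / (1 - r) ^ (k + 1)) := by
        rw [(hasSum_coe_mul_choose_mul_geometric_of_norm_lt_one k hr).tsum_eq,
          tsum_choose_mul_geometric_of_norm_lt_one k hr]
    _ = (k + 1) * r / (1 - r) := by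
        rw [div_div_eq_mul_div, div_one, pow_succ (1 - r) (k + 1), ← mul_div_assoc,
          div_mul_eq_div_div_swap, div_mul_cancel₀ _ (pow_ne_zero _ one_sub_ne_zero)]

end NegativeBinomial

theorem single_link_mean_throughput_alpha_one_general {𝕜 : Type*} [NormedDivisionRing 𝕜]
    [CharZero 𝕜] (k : ℕ) {ρ : 𝕜} (hρ0 : ρ ≠ 0) (hρ1 : ‖ρ‖ < 1) :
    (∑' n : ℕ, (n : 𝕜) * ((n + k).choose k : 𝕜) * ρ ^ n) /
        (∑' n : ℕ, ((n + k).choose k : 𝕜) * ρ ^ n) = (k + 1) * ρ / (1 - ρ) ∧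
      ρ / ((k + 1) * ρ / (1 - ρ)) = (1 - ρ) / (k + 1) := by
  refine ⟨tsum_coe_mul_choose_mul_geometric_div_tsum_of_norm_lt_one k hρ1, ?_⟩
  have comm : ρ * (1 - ρ) = (1 - ρ) * ρ := by rw [mul_one_sub, one_sub_mul]
  rw [div_div_eq_mul_div, comm, mul_div_mul_right _ _ hρ0]

/-- Mean throughput of a single link under flow-aware CSMA with `α_1 = 1`: for
`ρ ∈ (0,1)`, the stationary distribution `π(n) ∝ (n+1)ρⁿ` has mean
`∑ n(n+1)ρⁿ / ∑ (n+1)ρⁿ = 2ρ/(1-ρ)`, and consequently the mean throughput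
`γ_1 = ρ / (2ρ/(1-ρ))` equals `(1-ρ)/2`. -/
theorem single_link_mean_throughput_alpha_one (ρ : ℝ) (hρ0 : 0 < ρ) (hρ1 : ρ < 1) :
    (∑' n : ℕ, (n : ℝ) * ((n : ℝ) + 1) * ρ ^ n) / (∑' n : ℕ, ((n : ℝ) + 1) * ρ ^ n) =
      2 * ρ / (1 - ρ) ∧
    ρ / (2 * ρ / (1 - ρ)) = (1 - ρ) / 2 := by
  have hρ : ‖ρ‖ < 1 := by rwa [Real.norm_of_nonneg hρ0.le]
  simpa [one_add_one_eq_two] using single_link_mean_throughput_alpha_one_general 1 hρ0.ne' hρ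

end FlowCSMA
end

section
/- Light-traffic limit of the single-link mean throughput: for fixed α > 0, let π_ρ(x) = ∏_{n=1}^x ρ(1+αn)/(αn) for ρ ∈ (0,1) and let E(ρ) = Σ_{x≥0} x π_ρ(x) / Σ_{x≥0} π_ρ(x) be the stationary mean number of flows. Then the mean throughput γ_1(ρ) = ρ/E(ρ) satisfies γ_1(ρ) → α/(1+α) as ρ → 0⁺. -/
open scoped BigOperators

namespace FlowCSMA

/-- Stationary measure of the number of active flows on a single link:
`π_ρ(x) = ∏_{n=1}^x ρ(1+αn)/(αn)`, with `π_ρ(0) = 1`. -/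
noncomputable def statMeasure (α ρ : ℝ) (x : ℕ) : ℝ :=
  ∏ n ∈ Finset.Icc 1 x, ρ * (1 + α * (n : ℝ)) / (α * (n : ℝ))

/-- Stationary mean number of flows `E(ρ) = ∑ x π_ρ(x) / ∑ π_ρ(x)`. -/
noncomputable def meanFlows (α ρ : ℝ) : ℝ :=
  (∑' x : ℕ, (x : ℝ) * statMeasure α ρ x) / (∑' x : ℕ, statMeasure α ρ x)

/-!
With `r = 1 + 1/α`, the stationary measure is the unnormalised negative binomial distribution
`π_ρ(x) = multichoose r x * ρ ^ x`. The binomial series gives `∑ π_ρ(x) = (1 - ρ)⁻ʳ`, and since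
`(x + 1) * multichoose r (x + 1) = r * multichoose (r + 1) x` it also gives
`∑ x π_ρ(x) = r ρ (1 - ρ)⁻⁽ʳ⁺¹⁾`. Hence `E(ρ) = r ρ / (1 - ρ)` and the mean throughput is
`(1 - ρ) / r`.
-/

open Filter Topology

section Multichoose

variable {R : Type*} [NonAssocRing R] [Pow R ℕ] [NatPowAssoc R] [BinomialRing R]

lemma succ_nsmul_multichoose_succ_eq_add_mul (r : R) (n : ℕ) :
    (n + 1) • Ring.multichoose r (n + 1) = (r + n) * Ring.multichoose r n := by
  have absorb := Ring.choose_smul_choose (r + n) (Nat.le_add_left 1 n)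
  rw [Nat.choose_one_right, Ring.choose_one_right, Nat.add_sub_cancel, Nat.cast_one] at absorb
  rwa [Ring.multichoose_eq, Ring.multichoose_eq, Nat.cast_succ, ← add_assoc, add_sub_cancel_right]

lemma succ_nsmul_multichoose_succ_eq_multichoose_add_one_mul (r : R) (n : ℕ) :
    (n + 1) • Ring.multichoose r (n + 1) = Ring.multichoose (r + 1) n * r := by
  have absorb := Ring.choose_smul_choose (r + n) n.le_succ
  rw [Nat.choose_succ_self_right, Nat.succ_sub le_rfl, Nat.sub_self, add_sub_cancel_right,
    Ring.choose_one_right] at absorb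
  rwa [Ring.multichoose_eq, Ring.multichoose_eq, Nat.cast_succ, ← add_assoc, add_sub_cancel_right,
    add_right_comm, add_sub_cancel_right]

end Multichoose

section NegativeBinomial

variable {ρ : ℝ}

lemma hasSum_multichoose_mul_pow (r : ℝ) (hρ : |ρ| < 1) :
    HasSum (fun n : ℕ => Ring.multichoose r n * ρ ^ n) (1 / (1 - ρ) ^ r) := by
  have hball : ρ ∈ Metric.eball (0 : ℝ) 1 := by
    simpa [enorm_eq_nnnorm, ← NNReal.coe_lt_coe] using hρ
  simpa [Ring.multichoose_eq, mul_comm] using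
    (Real.one_div_one_sub_rpow_hasFPowerSeriesOnBall_zero r).hasSum hball

lemma hasSum_natCast_mul_multichoose_mul_pow (r : ℝ) (hρ : |ρ| < 1) :
    HasSum (fun n : ℕ => (n : ℝ) * (Ring.multichoose r n * ρ ^ n))
      (r * ρ / (1 - ρ) ^ (r + 1)) := by
  have hshift (n : ℕ) : ((n : ℝ) + 1) * (Ring.multichoose r (n + 1) * ρ ^ (n + 1)) =
      r * ρ * (Ring.multichoose (r + 1) n * ρ ^ n) := by
    rw [← mul_assoc, ← Nat.cast_succ, ← nsmul_eq_mul,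
      succ_nsmul_multichoose_succ_eq_multichoose_add_one_mul, pow_succ]
    ring
  rw [← hasSum_nat_add_iff' 1]
  simpa [hshift, div_eq_mul_inv] using
    (hasSum_multichoose_mul_pow (r + 1) hρ).mul_left (r * ρ)

end NegativeBinomial

section StationaryMeasure

variable {α : ℝ}

lemma statMeasure_eq_multichoose_mul_pow (hα : α ≠ 0) (ρ : ℝ) (x : ℕ) :
    statMeasure α ρ x = Ring.multichoose (1 + 1 / α) x * ρ ^ x := by
  induction x with
  | zero => simp [statMeasure]
  | succ x ih =>
    have hrec := succ_nsmul_multichoose_succ_eq_add_mul (1 + 1 / α) x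
    rw [nsmul_eq_mul, Nat.cast_succ] at hrec
    have hx : (x : ℝ) + 1 ≠ 0 := x.cast_add_one_ne_zero
    rw [statMeasure, Finset.prod_Icc_succ_top (Nat.le_add_left 1 x), ← statMeasure, ih,
      eq_div_of_mul_eq hx ((mul_comm _ _).trans hrec), Nat.cast_succ]
    field_simp
    ring

lemma meanFlows_eq {ρ : ℝ} (hα : α ≠ 0) (hρ : |ρ| < 1) :
    meanFlows α ρ = (1 + 1 / α) * ρ / (1 - ρ) := by
  have hpos : 0 < 1 - ρ := sub_pos.2 (lt_of_abs_lt hρ)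
  simp only [meanFlows, statMeasure_eq_multichoose_mul_pow hα]
  rw [(hasSum_natCast_mul_multichoose_mul_pow _ hρ).tsum_eq,
    (hasSum_multichoose_mul_pow _ hρ).tsum_eq, Real.rpow_add_one hpos.ne']
  field_simp

lemma tendsto_meanFlows_div_self (hα : α ≠ 0) :
    Tendsto (fun ρ : ℝ => meanFlows α ρ / ρ) (𝓝[≠] 0) (𝓝 (1 + 1 / α)) := by
  have hlim : Tendsto (fun ρ : ℝ => (1 + 1 / α) / (1 - ρ)) (𝓝[≠] 0) (𝓝 (1 + 1 / α)) := by
    have hcont : ContinuousAt (fun ρ : ℝ => (1 + 1 / α) / (1 - ρ)) 0 := by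
      fun_prop (disch := norm_num)
    simpa only [sub_zero, div_one] using hcont.tendsto.mono_left nhdsWithin_le_nhds
  have hsmall : ∀ᶠ ρ : ℝ in 𝓝[≠] 0, |ρ| < 1 :=
    nhdsWithin_le_nhds ((continuous_abs.tendsto' 0 0 abs_zero).eventually_lt_const one_pos)
  refine hlim.congr' ?_
  filter_upwards [hsmall, self_mem_nhdsWithin] with ρ hρ hρ₀
  rw [meanFlows_eq hα hρ, div_right_comm, mul_div_cancel_right₀ _ hρ₀]

end StationaryMeasure

theorem light_traffic_limit_general {α : ℝ} (hα : α ≠ 0) (h_one_add : 1 + α ≠ 0) :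
    Tendsto (fun ρ : ℝ => ρ / meanFlows α ρ) (𝓝[≠] 0) (𝓝 (α / (1 + α))) := by
  have hratio := tendsto_meanFlows_div_self hα
  rw [one_add_div hα, add_comm α 1] at hratio
  simpa only [inv_div] using hratio.inv₀ (div_ne_zero h_one_add hα)

/-- Light-traffic limit of the single-link mean throughput: for fixed `α > 0`, the mean
throughput `γ_1(ρ) = ρ / E(ρ)` tends to `α/(1+α)` as `ρ → 0⁺` (within `(0,1)`). -/
theorem light_traffic_limit (α : ℝ) (hα : 0 < α) :
    Filter.Tendsto (fun ρ : ℝ => ρ / meanFlows α ρ)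
      (nhdsWithin 0 (Set.Ioo 0 1)) (nhds (α / (1 + α))) := by
  exact (light_traffic_limit_general hα.ne' (by positivity)).mono_left
    (nhdsWithin_mono 0 fun _ hρ => hρ.1.ne')

end FlowCSMA
end
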